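/- Suppose C is a binary self-dual [48,24,10] code with an automorphism σ of order 11 of type 11-(4,4) (four 11-cycles and four fixed points). Then the projection π(F_σ(C)) is a binary self-dual code of length 8 all of whose codewords, when lifted back, have weight ≥ 10; consequently π(F_σ(C)) is, up to permutation of the last four coordinates, the code generated by (I_4 | I_4 + J_4), where I_4 is the 4×4 identity matrix and J_4 the 4×4 all-ones matrix. -/

import Mathlib

open Finset

/-- Hamming weight of a binary vector. -/
def wt {ι : Type*} [Fintype ι] (v : ι → ZMod 2) : ℕ :=
  (Finset.univ.filter fun i => v i ≠ 0).card

/-- Dual of a binary code under the standard dot product. -/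
def dualCode {ι : Type*} [Fintype ι] (C : Submodule (ZMod 2) (ι → ZMod 2)) :
    Submodule (ZMod 2) (ι → ZMod 2) where
  carrier := {x | ∀ c ∈ C, ∑ i, x i * c i = 0}
  add_mem' := by
    intro a b ha hb c hc
    have := ha c hc; have := hb c hc
    simp only [Pi.add_apply, add_mul, Finset.sum_add_distrib]
    simp [ha c hc, hb c hc]
  zero_mem' := by intro c hc; simp
  smul_mem' := by
    intro r a ha c hc
    simp only [Pi.smul_apply, smul_eq_mul, mul_assoc, ← Finset.mul_sum]
    simp [ha c hc]

/-- Fixed subcode F_σ(C). -/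
def fixedCode {ι : Type*} (σ : Equiv.Perm ι) (C : Submodule (ZMod 2) (ι → ZMod 2)) :
    Submodule (ZMod 2) (ι → ZMod 2) where
  carrier := {v | v ∈ C ∧ v ∘ σ = v}
  add_mem' := by
    rintro a b ⟨ha, ha'⟩ ⟨hb, hb'⟩
    refine ⟨C.add_mem ha hb, ?_⟩
    funext i
    simpa using congrFun (congrArg₂ (· + ·) ha' hb') i
  zero_mem' := ⟨C.zero_mem, rfl⟩
  smul_mem' := by
    rintro r a ⟨ha, ha'⟩
    exact ⟨C.smul_mem r ha, by funext i; simpa using congrArg (r • ·) (congrFun ha' i)⟩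

/-- Subcode E_σ(C): codewords with even weight on each cycle (and zero on fixed points). -/
def evenCode {ι : Type*} (p : ℕ) (σ : Equiv.Perm ι) (C : Submodule (ZMod 2) (ι → ZMod 2)) :
    Submodule (ZMod 2) (ι → ZMod 2) where
  carrier := {v | v ∈ C ∧ ∀ i, ∑ k ∈ Finset.range p, v ((σ ^ k) i) = 0}
  add_mem' := by
    rintro a b ⟨ha, ha'⟩ ⟨hb, hb'⟩
    refine ⟨C.add_mem ha hb, fun i => ?_⟩
    simp [Finset.sum_add_distrib, ha' i, hb' i]
  zero_mem' := ⟨C.zero_mem, by simp⟩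
  smul_mem' := by
    rintro r a ⟨ha, ha'⟩
    refine ⟨C.smul_mem r ha, fun i => ?_⟩
    simp only [Pi.smul_apply, smul_eq_mul]
    rw [← Finset.mul_sum, ha' i, mul_zero]

/-- Coordinate index set for an automorphism of type p-(c,f): `c` cycles of
length `p` followed by `f` fixed points. -/
abbrev Idx (p c f : ℕ) : Type := (Fin c × Fin p) ⊕ Fin f

/-- The standard permutation with `c` cycles of length `p` and `f` fixed points. -/
def stdPerm (p c f : ℕ) : Equiv.Perm (Idx p c f) :=
  Equiv.sumCongr (Equiv.prodCongr (Equiv.refl (Fin c)) (finRotate p)) (Equiv.refl (Fin f))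

/-- The projection π recording one bit per cycle and the fixed-point bits. -/
def proj (p c f : ℕ) [NeZero p] :
    (Idx p c f → ZMod 2) →ₗ[ZMod 2] ((Fin c ⊕ Fin f) → ZMod 2) where
  toFun v := Sum.elim (fun j => v (Sum.inl (j, 0))) (fun l => v (Sum.inr l))
  map_add' := by intro a b; funext i; cases i <;> simp
  map_smul' := by intro r a; funext i; cases i <;> simp

/-!
Write `D = π(F_σ(C))`. A fixed word is determined by its projection, and since the cycle length `p`
is odd, `π` preserves dot products of fixed words. A word fixed by `σ` has the same dot product
with `v` as with the sum of the `p` translates of `v`, so `D` inherits self-duality from `C`.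

A word of `D` supported on the four fixed points lifts to itself, hence is zero by the minimum
distance. So `D` has a generator matrix `(I | A)`, with `A` orthogonal of size `4`. The rows of `A`
have weight `1` or `3`; orthogonal rows of weights `1` and `3` add up to the all-ones vector, which
a third row rules out. Hence `A = P` or `A = P + J` for a permutation matrix `P`.

The minimum distance does not exclude `A = P`, but divisibility by `4` does. If `A = P` then the
fixed words have weights `(p + 1) * wt u`, divisible by `4`. On a self-dual code the weight is
additive modulo `4`, so the `p` translates of `v` add up to a fixed word of weight `≡ p * wt v`,
and `C` would be doubly even, whereas it has a word of weight `10`.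
-/

open scoped Matrix

section Weight

variable {ι κ : Type*} [Fintype ι] [Fintype κ]

lemma wt_eq_sum_val (v : ι → ZMod 2) : wt v = ∑ i, (v i).val := by
  have hval : ∀ a : ZMod 2, (if a ≠ 0 then 1 else 0) = a.val := by decide
  simp only [wt, card_filter, hval]

lemma wt_comp_equiv (e : κ ≃ ι) (v : ι → ZMod 2) : wt (v ∘ e) = wt v := by
  simp only [wt_eq_sum_val, Function.comp_apply, e.sum_comp fun i => (v i).val]

lemma wt_add_add_two_mul_wt_mul (u v : ι → ZMod 2) :
    wt (u + v) + 2 * wt (u * v) = wt u + wt v := by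
  have hval : ∀ a b : ZMod 2, (a + b).val + 2 * (a * b).val = a.val + b.val := by decide
  simp only [wt_eq_sum_val, mul_sum, ← sum_add_distrib, Pi.add_apply, Pi.mul_apply, hval]

lemma natCast_wt_mul (u v : ι → ZMod 2) : (wt (u * v) : ZMod 2) = u ⬝ᵥ v := by
  simp [wt_eq_sum_val, dotProduct]

lemma wt_add_modEq_four {u v : ι → ZMod 2} (h : u ⬝ᵥ v = 0) :
    wt (u + v) ≡ wt u + wt v [MOD 4] := by
  obtain ⟨m, hm⟩ : 2 ∣ wt (u * v) := by
    rw [← ZMod.natCast_eq_zero_iff, natCast_wt_mul, h]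
  rw [← wt_add_add_two_mul_wt_mul, hm, ← mul_assoc]
  exact (Nat.add_mul_mod_self_left _ _ _).symm

end Weight

section Dual

variable {ι : Type*} [Fintype ι] {C : Submodule (ZMod 2) (ι → ZMod 2)}

lemma mem_dualCode {x : ι → ZMod 2} : x ∈ dualCode C ↔ ∀ c ∈ C, x ⬝ᵥ c = 0 :=
  Iff.rfl

lemma finrank_add_finrank_dualCode (C : Submodule (ZMod 2) (ι → ZMod 2)) :
    Module.finrank (ZMod 2) C + Module.finrank (ZMod 2) (dualCode C) = Fintype.card ι := by
  classical
  have hdual : (dualCode C).map (dotProductEquiv (ZMod 2) ι).toLinearMap =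
      C.dualAnnihilator := by
    rw [Submodule.map_equiv_eq_comap_symm]
    ext φ
    obtain ⟨x, rfl⟩ := (dotProductEquiv (ZMod 2) ι).surjective φ
    simp [mem_dualCode, Submodule.mem_dualAnnihilator]
  rw [← Module.finrank_fintype_fun_eq_card (ZMod 2) (η := ι),
    ← Subspace.finrank_add_finrank_dualAnnihilator_eq C, ← hdual, LinearEquiv.finrank_map_eq]

lemma wt_sum_modEq_four {κ : Type*} (hC : C ≤ dualCode C) (s : Finset κ)
    {v : κ → ι → ZMod 2} (hv : ∀ k ∈ s, v k ∈ C) :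
    wt (∑ k ∈ s, v k) ≡ ∑ k ∈ s, wt (v k) [MOD 4] := by
  classical
  induction s using Finset.induction_on with
  | empty => simp [wt, Nat.ModEq.refl]
  | insert k s hk ih =>
    rw [forall_mem_insert] at hv
    rw [sum_insert hk, sum_insert hk]
    exact (wt_add_modEq_four (hC hv.1 _ (C.sum_mem hv.2))).trans ((ih hv.2).add_left _)

/-- A binary code is doubly even if all its weights are divisible by `4`. This property tells apart
the candidates `(I | P)` and `(I | P + J)` for the projected code. -/
def DoublyEven (C : Submodule (ZMod 2) (ι → ZMod 2)) : Prop :=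
  ∀ v ∈ C, 4 ∣ wt v

end Dual

section Automorphism

variable {ι : Type*} {p : ℕ} {σ : Equiv.Perm ι} {C : Submodule (ZMod 2) (ι → ZMod 2)}

/-- The sum of the translates of `v` under the first `p` powers of `σ`; when `σ ^ p = 1` this is
the trace of `v` to the words fixed by `σ`. -/
def orbitSum (p : ℕ) (σ : Equiv.Perm ι) (v : ι → ZMod 2) : ι → ZMod 2 :=
  ∑ k ∈ range p, v ∘ ⇑(σ ^ k)

lemma comp_pow_mem (hσC : ∀ v ∈ C, v ∘ σ ∈ C) {v : ι → ZMod 2} (hv : v ∈ C) (k : ℕ) :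
    v ∘ ⇑(σ ^ k) ∈ C := by
  induction k with
  | zero => exact hv
  | succ k ih => exact hσC _ ih

lemma comp_pow_eq_self {α : Type*} {v : ι → α} (hv : v ∘ σ = v) (k : ℕ) :
    v ∘ ⇑(σ ^ k) = v := by
  induction k with
  | zero => rfl
  | succ k ih => rw [pow_succ, Equiv.Perm.coe_mul, ← Function.comp_assoc, ih, hv]

lemma orbitSum_comp (hσ : σ ^ p = 1) (v : ι → ZMod 2) :
    orbitSum p σ v ∘ σ = orbitSum p σ v := by
  have hshift : orbitSum p σ v ∘ σ = ∑ k ∈ range p, v ∘ ⇑(σ ^ (k + 1)) := by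
    ext i
    simp [orbitSum, pow_succ]
  have hcycle := (sum_range_succ' (fun k => v ∘ ⇑(σ ^ k)) p).symm.trans (sum_range_succ _ p)
  rw [hσ, pow_zero, add_left_inj] at hcycle
  exact hshift.trans hcycle

lemma orbitSum_mem_fixedCode (hσ : σ ^ p = 1) (hσC : ∀ v ∈ C, v ∘ σ ∈ C) {v : ι → ZMod 2}
    (hv : v ∈ C) : orbitSum p σ v ∈ fixedCode σ C :=
  ⟨C.sum_mem fun k _ => comp_pow_mem hσC hv k, orbitSum_comp hσ v⟩

variable [Fintype ι]

lemma dotProduct_orbitSum (hp : Odd p) {x : ι → ZMod 2} (hx : x ∘ σ = x) (v : ι → ZMod 2) :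
    x ⬝ᵥ orbitSum p σ v = x ⬝ᵥ v := by
  have htranslate (k : ℕ) : x ⬝ᵥ v ∘ ⇑(σ ^ k) = x ⬝ᵥ v := by
    conv_lhs => rw [← comp_pow_eq_self hx k]
    exact comp_equiv_dotProduct_comp_equiv x v (σ ^ k)
  simp [orbitSum, dotProduct_sum, htranslate, ZMod.natCast_eq_one_iff_odd.2 hp]

lemma wt_orbitSum_modEq_four (hC : C ≤ dualCode C) (hσC : ∀ v ∈ C, v ∘ σ ∈ C)
    {v : ι → ZMod 2} (hv : v ∈ C) : wt (orbitSum p σ v) ≡ p * wt v [MOD 4] := by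
  simpa [orbitSum, wt_comp_equiv] using
    wt_sum_modEq_four hC (range p) fun k _ => comp_pow_mem hσC hv k

theorem DoublyEven.of_fixedCode (hp : Odd p) (hσ : σ ^ p = 1) (hC : C ≤ dualCode C)
    (hσC : ∀ v ∈ C, v ∘ σ ∈ C) (h : DoublyEven (fixedCode σ C)) : DoublyEven C := by
  intro v hv
  have hmul : 4 ∣ p * wt v := ((wt_orbitSum_modEq_four hC hσC hv).dvd_iff dvd_rfl).1
    (h _ (orbitSum_mem_fixedCode hσ hσC hv))
  exact (Nat.Coprime.pow_left 2 hp.coprime_two_left).dvd_of_dvd_mul_left hmul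

end Automorphism

section StandardPermutation

variable {p c f : ℕ}

lemma finRotate_pow_self [NeZero p] : finRotate p ^ p = 1 := by
  have hadd : ⇑(finRotate p) = (· + 1) := funext finRotate_apply
  ext1 i
  rw [← Equiv.Perm.iterate_eq_pow, hadd, add_right_iterate]
  simpa using card_nsmul_eq_zero (x := (1 : Fin p))

lemma stdPerm_pow (k : ℕ) :
    stdPerm p c f ^ k =
      Equiv.sumCongr (Equiv.prodCongr (Equiv.refl (Fin c)) (finRotate p ^ k)) (Equiv.refl _) := by
  induction k with
  | zero => ext (⟨j, i⟩ | l) : 1 <;> rfl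
  | succ k ih => rw [pow_succ, ih]; ext (⟨j, i⟩ | l) : 1 <;> rfl

lemma stdPerm_pow_self [NeZero p] : stdPerm p c f ^ p = 1 := by
  rw [stdPerm_pow, finRotate_pow_self]
  ext (⟨j, i⟩ | l) : 1 <;> rfl

/-- The word constant on each `p`-cycle with prescribed projection; it inverts `proj` on the words
fixed by `stdPerm`. -/
def cycleLift (p : ℕ) (w : Fin c ⊕ Fin f → ZMod 2) : Idx p c f → ZMod 2 :=
  w ∘ Sum.map Prod.fst id

lemma cycleLift_comp_stdPerm (w : Fin c ⊕ Fin f → ZMod 2) :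
    cycleLift p w ∘ stdPerm p c f = cycleLift p w := by
  ext (⟨j, i⟩ | l) <;> rfl

lemma proj_cycleLift [NeZero p] (w : Fin c ⊕ Fin f → ZMod 2) :
    proj p c f (cycleLift p w) = w := by
  ext (j | l) <;> rfl

lemma cycleLift_proj [NeZero p] {v : Idx p c f → ZMod 2} (hv : v ∘ stdPerm p c f = v) :
    cycleLift p (proj p c f v) = v := by
  obtain ⟨n, rfl⟩ := Nat.exists_eq_succ_of_ne_zero (NeZero.ne p)
  have hstep (j : Fin c) (i : Fin (n + 1)) : v (Sum.inl (j, i + 1)) = v (Sum.inl (j, i)) := by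
    simpa [stdPerm] using congrFun hv (Sum.inl (j, i))
  ext (⟨j, i⟩ | l)
  · change v (Sum.inl (j, 0)) = v (Sum.inl (j, i))
    induction i using Fin.induction with
    | zero => rfl
    | succ i ih => rw [ih, ← hstep, Fin.coeSucc_eq_succ]
  · rfl

lemma mem_map_proj_fixedCode [NeZero p] {C : Submodule (ZMod 2) (Idx p c f → ZMod 2)}
    {w : Fin c ⊕ Fin f → ZMod 2} :
    w ∈ (fixedCode (stdPerm p c f) C).map (proj p c f) ↔ cycleLift p w ∈ C := by
  constructor
  · rintro ⟨v, ⟨hv, hfix⟩, rfl⟩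
    rwa [cycleLift_proj hfix]
  · exact fun h => ⟨cycleLift p w, ⟨h, cycleLift_comp_stdPerm w⟩, proj_cycleLift w⟩

lemma cycleLift_dotProduct_cycleLift (hp : Odd p) (u w : Fin c ⊕ Fin f → ZMod 2) :
    cycleLift p u ⬝ᵥ cycleLift p w = u ⬝ᵥ w := by
  simp [cycleLift, dotProduct, Fintype.sum_sum_type, Fintype.sum_prod_type,
    ZMod.natCast_eq_one_iff_odd.2 hp]

lemma wt_cycleLift (w : Fin c ⊕ Fin f → ZMod 2) :
    wt (cycleLift p w) = p * wt (w ∘ Sum.inl) + wt (w ∘ Sum.inr) := by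
  simp [cycleLift, wt_eq_sum_val, Fintype.sum_sum_type, Fintype.sum_prod_type, mul_sum]

variable [NeZero p] {C : Submodule (ZMod 2) (Idx p c f → ZMod 2)}

theorem map_proj_fixedCode_eq_dualCode (hp : Odd p) (hself : C = dualCode C)
    (hσC : ∀ v ∈ C, v ∘ stdPerm p c f ∈ C) :
    (fixedCode (stdPerm p c f) C).map (proj p c f) =
      dualCode ((fixedCode (stdPerm p c f) C).map (proj p c f)) := by
  apply le_antisymm
  · intro w hw u hu
    rw [mem_map_proj_fixedCode] at hw hu
    exact (cycleLift_dotProduct_cycleLift hp w u).symm.trans (hself.le hw _ hu)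
  · intro w hw
    rw [mem_map_proj_fixedCode, hself, mem_dualCode]
    intro v hv
    have hsum := orbitSum_mem_fixedCode stdPerm_pow_self hσC hv
    rw [← dotProduct_orbitSum hp (cycleLift_comp_stdPerm w), ← cycleLift_proj hsum.2,
      cycleLift_dotProduct_cycleLift hp]
    exact hw _ ⟨_, hsum, rfl⟩

lemma le_wt_of_mem_map_proj_fixedCode {d : ℕ} (hmin : ∀ v ∈ C, v ≠ 0 → d ≤ wt v)
    {w : Fin c ⊕ Fin f → ZMod 2} (hw : w ∈ (fixedCode (stdPerm p c f) C).map (proj p c f))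
    (hne : w ≠ 0) : d ≤ p * wt (w ∘ Sum.inl) + wt (w ∘ Sum.inr) := by
  rw [← wt_cycleLift]
  refine hmin _ (mem_map_proj_fixedCode.1 hw) fun h => hne ?_
  rw [← proj_cycleLift (p := p) w, h, map_zero]

lemma eq_zero_of_mem_map_proj_fixedCode {d : ℕ} (hd : f < d)
    (hmin : ∀ v ∈ C, v ≠ 0 → d ≤ wt v) {w : Fin c ⊕ Fin f → ZMod 2}
    (hw : w ∈ (fixedCode (stdPerm p c f) C).map (proj p c f)) (hleft : w ∘ Sum.inl = 0) :
    w = 0 := by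
  by_contra hne
  have hlift := le_wt_of_mem_map_proj_fixedCode hmin hw hne
  have hright : wt (w ∘ Sum.inr) ≤ f := (card_le_univ _).trans_eq (Fintype.card_fin f)
  have hzero : wt (w ∘ Sum.inl) = 0 := by rw [hleft]; simp [wt]
  rw [hzero, mul_zero, zero_add] at hlift
  omega

end StandardPermutation

section Systematic

variable {κ : Type*} [Fintype κ] {D : Submodule (ZMod 2) (κ ⊕ κ → ZMod 2)}

lemma exists_mem_comp_inl_eq (hself : D = dualCode D)
    (hD : ∀ w ∈ D, w ∘ Sum.inl = 0 → w = 0) (u : κ → ZMod 2) : ∃ w ∈ D, w ∘ Sum.inl = u := by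
  let left := (LinearMap.funLeft (ZMod 2) (ZMod 2) Sum.inl).domRestrict D
  have hinj : Function.Injective left :=
    (injective_iff_map_eq_zero left).2 fun w hw => Subtype.ext (hD w w.2 hw)
  have hrank : Module.finrank (ZMod 2) D = Module.finrank (ZMod 2) (κ → ZMod 2) := by
    have h := finrank_add_finrank_dualCode D
    rw [← hself, Fintype.card_sum] at h
    rw [Module.finrank_fintype_fun_eq_card]
    omega
  obtain ⟨w, hw⟩ := (LinearMap.injective_iff_surjective_of_finrank_eq_finrank hrank).1 hinj u
  exact ⟨w, w.2, hw⟩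

variable [DecidableEq κ]

/-- The code with generator matrix `(I | A)`: the form of a code whose left coordinates are an
information set. -/
def systematicCode {κ' : Type*} (A : Matrix κ κ' (ZMod 2)) :
    Submodule (ZMod 2) (κ ⊕ κ' → ZMod 2) :=
  LinearMap.range (Matrix.fromCols 1 A).vecMulLinear

lemma comp_inl_vecMul_eq_comp_inr {κ' : Type*} {A : Matrix κ κ' (ZMod 2)}
    {w : κ ⊕ κ' → ZMod 2} (hw : w ∈ systematicCode A) : (w ∘ Sum.inl) ᵥ* A = w ∘ Sum.inr := by
  obtain ⟨u, rfl⟩ := hw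
  simp [Matrix.vecMul_fromCols]

lemma systematicCode_eq_span {κ' : Type*} (A : Matrix κ κ' (ZMod 2)) :
    systematicCode A =
      Submodule.span (ZMod 2) (Set.range fun i => Sum.elim (Pi.single i 1) (A i)) := by
  rw [systematicCode, range_vecMulLinear]
  congr! with i
  ext (j | l) <;> simp [Matrix.one_apply, Pi.single_apply, eq_comm]

lemma mul_transpose_eq_one_of_systematicCode_le_dualCode {κ' : Type*} [Fintype κ']
    {A : Matrix κ κ' (ZMod 2)} (hA : systematicCode A ≤ dualCode (systematicCode A)) :
    A * Aᵀ = 1 := by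
  have hrow (i : κ) : Sum.elim (Pi.single i 1) (A i) ∈ systematicCode A :=
    systematicCode_eq_span A ▸ Submodule.subset_span ⟨i, rfl⟩
  ext i j
  have hij := mem_dualCode.1 (hA (hrow i)) _ (hrow j)
  rw [sumElim_dotProduct_sumElim, single_one_dotProduct, CharTwo.add_eq_zero] at hij
  rw [Matrix.one_apply, Matrix.mul_apply']
  exact hij.symm.trans (by simp [Pi.single_apply])

theorem exists_eq_systematicCode (hself : D = dualCode D)
    (hD : ∀ w ∈ D, w ∘ Sum.inl = 0 → w = 0) :
    ∃ A : Matrix κ κ (ZMod 2), A * Aᵀ = 1 ∧ D = systematicCode A := by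
  choose r hrD hr using fun i : κ => exists_mem_comp_inl_eq hself hD (Pi.single i 1)
  let A : Matrix κ κ (ZMod 2) := Matrix.of fun i => r i ∘ Sum.inr
  have hle : systematicCode A ≤ D := by
    rw [systematicCode_eq_span, Submodule.span_le, Set.range_subset_iff]
    intro i
    rw [← hr i]
    exact (Sum.elim_comp_inl_inr (r i)).symm ▸ hrD i
  have hge : D ≤ systematicCode A := by
    intro w hw
    have hmem : (w ∘ Sum.inl) ᵥ* Matrix.fromCols 1 A ∈ systematicCode A := ⟨_, rfl⟩
    have hdiff := hD _ (D.sub_mem hw (hle hmem)) (by ext; simp [Matrix.vecMul_fromCols])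
    rwa [sub_eq_zero.1 hdiff]
  have hDA : D = systematicCode A := le_antisymm hge hle
  exact ⟨A, mul_transpose_eq_one_of_systematicCode_le_dualCode (hDA ▸ hself.le), hDA⟩

end Systematic

section OrthogonalMatrix

variable {m n : Type*} [Fintype n] [DecidableEq m]

lemma row_dotProduct_row {R : Type*} [NonAssocSemiring R] {A : Matrix m n R} (hA : A * Aᵀ = 1)
    (i j : m) : A i ⬝ᵥ A j = if i = j then 1 else 0 := by
  rw [← Matrix.one_apply, ← hA]
  rfl

lemma dotProduct_one_eq_dotProduct_self (v : n → ZMod 2) : v ⬝ᵥ 1 = v ⬝ᵥ v := by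
  have hidem : ∀ a : ZMod 2, a * 1 = a * a := by decide
  exact sum_congr rfl fun i _ => hidem (v i)

lemma row_add_row_ne_one [Fintype m] (hm : 2 < Fintype.card m) {A : Matrix m n (ZMod 2)}
    (hA : A * Aᵀ = 1) (i j : m) : A i + A j ≠ 1 := by
  intro hone
  obtain ⟨k, -, hk⟩ : ∃ k ∈ univ, k ∉ ({i, j} : Finset m) :=
    exists_mem_notMem_of_card_lt_card (card_le_two.trans_lt hm)
  simp only [mem_insert, mem_singleton, not_or] at hk
  -- The row `k` is orthogonal to `A i + A j = 1`, that is, to itself.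
  have hself := dotProduct_one_eq_dotProduct_self (A k)
  rw [← hone, dotProduct_add, row_dotProduct_row hA, row_dotProduct_row hA,
    row_dotProduct_row hA] at hself
  simp [hk] at hself

lemma exists_eq_permMatrix_of_row_eq_single {R : Type*} [NonAssocSemiring R] [Nontrivial R]
    [DecidableEq n] {A : Matrix n n R} (hA : A * Aᵀ = 1)
    (hrow : ∀ i, ∃ x, A i = Pi.single x 1) : ∃ τ : Equiv.Perm n, A = τ.permMatrix R := by
  choose z hz using hrow
  have hinj : Function.Injective z := by
    intro i j hij
    by_contra hne
    have horth := row_dotProduct_row hA i j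
    simp [hz, hij, hne] at horth
  refine ⟨Equiv.ofBijective z (Finite.injective_iff_bijective.1 hinj), ?_⟩
  ext i l
  simp [hz, PEquiv.toMatrix_apply, Pi.single_apply, eq_comm]

lemma add_ones_mul_transpose_add_ones (hn : Even (Fintype.card n)) {A : Matrix m n (ZMod 2)}
    (hA : A * Aᵀ = 1) :
    (A + Matrix.of 1) * (A + Matrix.of 1)ᵀ = 1 := by
  have hone (i : m) : A i ⬝ᵥ 1 = 1 := by
    rw [dotProduct_one_eq_dotProduct_self, row_dotProduct_row hA, if_pos rfl]
  ext i j
  change (A i + 1) ⬝ᵥ (A j + 1) = _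
  rw [add_dotProduct, dotProduct_add, dotProduct_add, hone, dotProduct_comm 1, hone,
    one_dotProduct_one, ZMod.natCast_eq_zero_iff_even.2 hn, row_dotProduct_row hA,
    Matrix.one_apply, add_zero, add_assoc, CharTwo.add_self_eq_zero, add_zero]

lemma eq_single_or_eq_single_add_one {a : Fin 4 → ZMod 2} (ha : a ⬝ᵥ a = 1) :
    ∃ x, a = Pi.single x 1 ∨ a = Pi.single x 1 + 1 := by
  revert a
  decide

theorem exists_eq_permMatrix_or_eq_permMatrix_add_ones {A : Matrix (Fin 4) (Fin 4) (ZMod 2)}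
    (hA : A * Aᵀ = 1) : ∃ τ : Equiv.Perm (Fin 4),
      A = τ.permMatrix (ZMod 2) ∨ A = τ.permMatrix (ZMod 2) + Matrix.of 1 := by
  have hrow (i : Fin 4) : ∃ x, A i = Pi.single x 1 ∨ A i = Pi.single x 1 + 1 :=
    eq_single_or_eq_single_add_one (by rw [row_dotProduct_row hA, if_pos rfl])
  by_cases hsingle : ∀ i, ∃ x, A i = Pi.single x 1
  · exact (exists_eq_permMatrix_of_row_eq_single hA hsingle).imp fun _ => Or.inl
  · obtain ⟨j, hj⟩ := not_forall.1 hsingle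
    obtain ⟨y, hy⟩ : ∃ y, A j = Pi.single y 1 + 1 :=
      (hrow j).imp fun y hy => hy.resolve_left fun h => hj ⟨y, h⟩
    have hcompl (i : Fin 4) : ∃ x, A i + 1 = Pi.single x 1 := by
      obtain ⟨x, hx | hx⟩ := hrow i
      · have hij : i ≠ j := fun h => hj ⟨x, h ▸ hx⟩
        have horth := row_dotProduct_row hA i j
        have hxy : x = y := by
          by_contra hne
          simp [hx, hy, hij, hne] at horth
        refine absurd ?_ (row_add_row_ne_one (by simp) hA i j)
        rw [hx, hy, hxy, ← add_assoc, CharTwo.add_self_eq_zero, zero_add]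
      · exact ⟨x, by rw [hx, add_assoc, CharTwo.add_self_eq_zero, add_zero]⟩
    obtain ⟨τ, hτ⟩ := exists_eq_permMatrix_of_row_eq_single
      (add_ones_mul_transpose_add_ones (by decide) hA) hcompl
    exact ⟨τ, Or.inr <| by rw [← hτ, add_assoc, CharTwo.add_self_eq_zero, add_zero]⟩

end OrthogonalMatrix

lemma wt_inl_eq_wt_inr_of_mem_systematicCode_permMatrix {κ : Type*} [Fintype κ] [DecidableEq κ]
    {τ : Equiv.Perm κ} {w : κ ⊕ κ → ZMod 2} (hw : w ∈ systematicCode (τ.permMatrix (ZMod 2))) :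
    wt (w ∘ Sum.inl) = wt (w ∘ Sum.inr) := by
  rw [← comp_inl_vecMul_eq_comp_inr hw, Matrix.vecMul_permMatrix, wt_comp_equiv]

lemma systematicCode_permMatrix_add_ones {κ : Type*} [Fintype κ] [DecidableEq κ]
    (τ : Equiv.Perm κ) :
    systematicCode (τ.permMatrix (ZMod 2) + Matrix.of 1) =
      Submodule.span (ZMod 2) {w : κ ⊕ κ → ZMod 2 | ∃ i,
        w = Sum.elim (fun j => if j = i then 1 else 0)
          (fun l => if τ.symm l = i then 0 else 1)} := by
  rw [systematicCode_eq_span]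
  congr 1
  refine Set.ext fun w => exists_congr fun i => eq_comm.trans (Eq.congr_right ?_)
  ext (j | l)
  · exact Pi.single_apply i 1 j
  · obtain rfl | h := eq_or_ne l (τ i)
    · simp [PEquiv.toMatrix_apply, CharTwo.add_self_eq_zero]
    · simp [PEquiv.toMatrix_apply, Equiv.symm_apply_eq, h, h.symm]

lemma doublyEven_fixedCode_of_map_proj_eq {p c : ℕ} [NeZero p] (hp : p % 4 = 3)
    {C : Submodule (ZMod 2) (Idx p c c → ZMod 2)} {τ : Equiv.Perm (Fin c)}
    (hπ : (fixedCode (stdPerm p c c) C).map (proj p c c) =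
      systematicCode (τ.permMatrix (ZMod 2))) :
    DoublyEven (fixedCode (stdPerm p c c) C) := by
  intro v hv
  have hmem := hπ ▸ Submodule.mem_map_of_mem (f := proj p c c) hv
  rw [← cycleLift_proj hv.2, wt_cycleLift,
    wt_inl_eq_wt_inr_of_mem_systematicCode_permMatrix hmem, ← Nat.succ_mul]
  exact Dvd.dvd.mul_right (by omega) _

theorem statement18_general {p d : ℕ} [NeZero p] (hp : p % 4 = 3) (hd : 4 < d)
    {C : Submodule (ZMod 2) (Idx p 4 4 → ZMod 2)} (hself : C = dualCode C)
    (hmin : ∀ v ∈ C, v ≠ 0 → d ≤ wt v) (hC : ¬ DoublyEven C)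
    (haut : ∀ v ∈ C, v ∘ stdPerm p 4 4 ∈ C) :
    Submodule.map (proj p 4 4) (fixedCode (stdPerm p 4 4) C) =
      dualCode (Submodule.map (proj p 4 4) (fixedCode (stdPerm p 4 4) C)) ∧
    (∀ w ∈ Submodule.map (proj p 4 4) (fixedCode (stdPerm p 4 4) C), w ≠ 0 →
      d ≤ p * wt (fun j : Fin 4 => w (Sum.inl j)) + wt (fun l : Fin 4 => w (Sum.inr l))) ∧
    (∃ τ : Equiv.Perm (Fin 4),
      Submodule.map (proj p 4 4) (fixedCode (stdPerm p 4 4) C) =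
        Submodule.span (ZMod 2)
          {w : Fin 4 ⊕ Fin 4 → ZMod 2 | ∃ i : Fin 4,
            w = Sum.elim (fun j => if j = i then 1 else 0)
                         (fun l => if τ l = i then 0 else 1)}) := by
  have hodd : Odd p := Nat.odd_iff.2 (by omega)
  have hself_proj := map_proj_fixedCode_eq_dualCode hodd hself haut
  refine ⟨hself_proj, fun w hw => le_wt_of_mem_map_proj_fixedCode hmin hw, ?_⟩
  obtain ⟨A, hA, hπ⟩ := exists_eq_systematicCode hself_proj fun w =>
    eq_zero_of_mem_map_proj_fixedCode hd hmin
  obtain ⟨τ, rfl | rfl⟩ := exists_eq_permMatrix_or_eq_permMatrix_add_ones hA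
  · have hfixed := doublyEven_fixedCode_of_map_proj_eq hp hπ
    exact absurd (hfixed.of_fixedCode hodd stdPerm_pow_self hself.le haut) hC
  · exact ⟨τ.symm, hπ.trans (systematicCode_permMatrix_add_ones τ)⟩

/-- For a binary self-dual [48,24,10] code with an automorphism of order 11 of type
11-(4,4) (standard form), the projection `π(F_σ(C))` is a self-dual code of length 8
all of whose nonzero words lift to weight ≥ 10; consequently, up to a permutation of
the last four coordinates, it is generated by the rows of `(I₄ | I₄ + J₄)`. -/
theorem statement18
    (C : Submodule (ZMod 2) (Idx 11 4 4 → ZMod 2))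
    (hself : C = dualCode C)
    (hdim : Module.finrank (ZMod 2) C = 24)
    (hmin : ∀ v ∈ C, v ≠ 0 → 10 ≤ wt v) (hex : ∃ v ∈ C, wt v = 10)
    (haut : ∀ v, v ∈ C ↔ v ∘ (stdPerm 11 4 4) ∈ C) :
    Submodule.map (proj 11 4 4) (fixedCode (stdPerm 11 4 4) C) =
      dualCode (Submodule.map (proj 11 4 4) (fixedCode (stdPerm 11 4 4) C)) ∧
    (∀ w ∈ Submodule.map (proj 11 4 4) (fixedCode (stdPerm 11 4 4) C), w ≠ 0 →
      10 ≤ 11 * wt (fun j : Fin 4 => w (Sum.inl j)) + wt (fun l : Fin 4 => w (Sum.inr l))) ∧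
    (∃ τ : Equiv.Perm (Fin 4),
      Submodule.map (proj 11 4 4) (fixedCode (stdPerm 11 4 4) C) =
        Submodule.span (ZMod 2)
          {w : Fin 4 ⊕ Fin 4 → ZMod 2 | ∃ i : Fin 4,
            w = Sum.elim (fun j => if j = i then 1 else 0)
                         (fun l => if τ l = i then 0 else 1)}) := by
  obtain ⟨v, hv, hwt⟩ := hex
  exact statement18_general rfl (by decide) hself hmin
    (fun hC => absurd (hwt ▸ hC v hv) (by decide)) fun v => (haut v).1
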